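/- arXiv:0904.1158 — 10 statements merged into one kernel-verified Lean document; each statement's English description precedes it below -/
import Mathlib

section
/- Let λ ⊇ μ be strict partitions such that the skew shifted Young diagram λ/μ has n cells, and let T be a standard tableau of shape λ/μ. Then the content sequence of T is a splittable tuple in ℕ^n. -/
/-- A strict partition: a strictly decreasing list of positive integers. -/
def StrictPartition (l : List ℕ) : Prop :=
  l.Chain' (· > ·) ∧ ∀ x ∈ l, 0 < x

/-- The shifted Young diagram of a strict partition (0-indexed):
row `r` consists of the cells `(r, j)` with `r ≤ j < r + λ_r`. -/
def shiftedCells (l : List ℕ) : Set (ℕ × ℕ) :=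
  {p : ℕ × ℕ | p.1 ≤ p.2 ∧ p.2 < p.1 + l.getD p.1 0}

/-- `D` is the cell set of a skew shifted Young diagram. -/
def IsSkewShifted (D : Set (ℕ × ℕ)) : Prop :=
  ∃ lam mu : List ℕ, StrictPartition lam ∧ StrictPartition mu ∧
    (∀ r, mu.getD r 0 ≤ lam.getD r 0) ∧ D = shiftedCells lam \ shiftedCells mu

/-- A standard tableau of shape `D` with `n` cells: a bijection from `{1,…,n}`
(i.e. `Fin n`) onto `D` whose labels increase along rows and down columns. -/
def IsStandard {n : ℕ} (D : Set (ℕ × ℕ)) (T : Fin n → ℕ × ℕ) : Prop :=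
  Function.Injective T ∧ Set.range T = D ∧
  (∀ k l : Fin n, (T l).1 = (T k).1 → (T l).2 = (T k).2 + 1 → k < l) ∧
  (∀ k l : Fin n, (T l).1 = (T k).1 + 1 → (T l).2 = (T k).2 → k < l)

/-- The content sequence of a tableau: the content `j − r` of the cell labeled `k`. -/
def contentSeq {n : ℕ} (T : Fin n → ℕ × ℕ) : Fin n → ℕ := fun k => (T k).2 - (T k).1

/-- A tuple `i ∈ ℕ^n` is splittable if whenever `i k = i l` with `k < l`:
if the common value is `0` then `1` occurs strictly between, and if it is `≥ 1`
then both the value minus one and the value plus one occur strictly between. -/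
def Splittable {n : ℕ} (i : Fin n → ℕ) : Prop :=
  ∀ k l : Fin n, k < l → i k = i l →
    (i k = 0 → ∃ a, k < a ∧ a < l ∧ i a = 1) ∧
    (1 ≤ i k → (∃ a, k < a ∧ a < l ∧ i a + 1 = i k) ∧ (∃ a, k < a ∧ a < l ∧ i a = i k + 1))

/-- `j` is obtained from `i` by one admissible simple transposition. -/
def AdmissibleSwap {n : ℕ} (i j : Fin n → ℕ) : Prop :=
  ∃ (k : ℕ) (hk : k + 1 < n),
    i ⟨k, Nat.lt_of_succ_lt hk⟩ ≠ i ⟨k + 1, hk⟩ + 1 ∧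
    i ⟨k + 1, hk⟩ ≠ i ⟨k, Nat.lt_of_succ_lt hk⟩ + 1 ∧
    j = i ∘ Equiv.swap ⟨k, Nat.lt_of_succ_lt hk⟩ ⟨k + 1, hk⟩

/-- Equivalence of tuples under finite chains of admissible transpositions. -/
def EquivTuples {n : ℕ} (i j : Fin n → ℕ) : Prop :=
  Relation.ReflTransGen AdmissibleSwap i j

theorem strict_aux (l : List ℕ) (h : StrictPartition l) (a b : ℕ) (hab : a ≤ b)
    (hb : 0 < l.getD b 0) : b + l.getD b 0 ≤ a + l.getD a 0 := by
  induction b, hab using Nat.le_induction with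
  | base => exact le_rfl
  | succ b hab ih =>
    have hlen : b + 1 < l.length := by
      by_contra hc
      rw [List.getD_eq_default _ _ (by omega)] at hb
      omega
    have h1 := List.isChain_iff_getElem.1 h.1 b hlen
    rw [List.getD_eq_getElem _ _ hlen] at hb ⊢
    rw [List.getD_eq_getElem _ _ (by omega : b < l.length)] at ih
    have := ih (by omega)
    omega

theorem convex_aux (lam mu : List ℕ) (hlam : StrictPartition lam) (hmu : StrictPartition mu)
    (p q : ℕ × ℕ) (hp : p ∈ shiftedCells lam \ shiftedCells mu)
    (hq : q ∈ shiftedCells lam \ shiftedCells mu) (x y : ℕ) (hxy : x ≤ y)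
    (h1 : p.1 ≤ x) (h2 : p.2 ≤ y) (h3 : x ≤ q.1) (h4 : y ≤ q.2) :
    (x, y) ∈ shiftedCells lam \ shiftedCells mu := by
  simp only [shiftedCells, Set.mem_diff, Set.mem_setOf_eq] at hp hq ⊢
  have a := strict_aux lam hlam x q.1 h3 (by omega)
  refine ⟨⟨hxy, by omega⟩, ?_⟩
  rintro ⟨-, h⟩
  have b := strict_aux mu hmu p.1 x h1 (by omega)
  exact hp.2 ⟨hp.1.1, by omega⟩

theorem mono_aux (n : ℕ) (lam mu : List ℕ)
    (hlam : StrictPartition lam) (hmu : StrictPartition mu)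
    (T : Fin n → ℕ × ℕ)
    (hT : IsStandard (shiftedCells lam \ shiftedCells mu) T) (m : ℕ) :
    ∀ k l : Fin n, (T k).1 ≤ (T l).1 → (T k).2 ≤ (T l).2 →
      (T l).1 + (T l).2 = (T k).1 + (T k).2 + m → k ≤ l := by
  obtain ⟨hinj, hr, hrow, hcol⟩ := hT
  have mem : ∀ k, T k ∈ shiftedCells lam \ shiftedCells mu := fun k => hr ▸ Set.mem_range_self k
  have le : ∀ k, (T k).1 ≤ (T k).2 := fun k => (mem k).1.1
  induction m with
  | zero =>
    intro k l h1 h2 h3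
    exact (hinj (Prod.ext (by omega) (by omega))).le
  | succ m ih =>
    intro k l h1 h2 h3
    have hk := le k
    have hl := le l
    by_cases hc : (T k).2 < (T l).2
    · have := convex_aux lam mu hlam hmu _ _ (mem k) (mem l) (T k).1 ((T k).2 + 1)
        (by omega) (by omega) (by omega) (by omega) (by omega)
      rw [← hr] at this
      obtain ⟨a, ha⟩ := this
      have e1 := hrow k a (by rw [ha]) (by rw [ha])
      have e2 := ih a l (by rw [ha]; omega) (by rw [ha]; omega) (by rw [ha]; dsimp only; omega)
      exact (e1.trans_le e2).le
    · have := convex_aux lam mu hlam hmu _ _ (mem k) (mem l) ((T k).1 + 1) (T k).2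
        (by omega) (by omega) (by omega) (by omega) (by omega)
      rw [← hr] at this
      obtain ⟨a, ha⟩ := this
      have e1 := hcol k a (by rw [ha]) (by rw [ha])
      have e2 := ih a l (by rw [ha]; dsimp only; omega) (by rw [ha]; dsimp only; omega)
        (by rw [ha]; dsimp only; omega)
      exact (e1.trans_le e2).le

/-- the content sequence of a standard tableau of skew shifted
shape with `n` cells is splittable. -/
theorem content_seq_splittable (n : ℕ) (lam mu : List ℕ)
    (hlam : StrictPartition lam) (hmu : StrictPartition mu)
    (hsub : ∀ r, mu.getD r 0 ≤ lam.getD r 0)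
    (T : Fin n → ℕ × ℕ)
    (hT : IsStandard (shiftedCells lam \ shiftedCells mu) T) :
    Splittable (contentSeq T) := by
  have mono := mono_aux n lam mu hlam hmu T hT
  obtain ⟨hinj, hr, hrow, hcol⟩ := hT
  have mem : ∀ k, T k ∈ shiftedCells lam \ shiftedCells mu := fun k => hr ▸ Set.mem_range_self k
  have le : ∀ k, (T k).1 ≤ (T k).2 := fun k => (mem k).1.1
  intro k l hkl hc
  simp only [contentSeq] at hc ⊢
  have hk := le k
  have hl := le l
  have hlt : (T k).1 < (T l).1 := by
    by_contra hn
    have := mono ((T k).1 + (T k).2 - ((T l).1 + (T l).2)) l k (by omega) (by omega) (by omega)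
    exact absurd hkl (not_lt.2 this)
  have key : ∀ x y, x ≤ y → (T k).1 ≤ x → (T k).2 ≤ y → x ≤ (T l).1 → y ≤ (T l).2 →
      (x, y) ≠ T k → (x, y) ≠ T l → ∃ a, k < a ∧ a < l ∧ T a = (x, y) := by
    intro x y hxy h1 h2 h3 h4 n1 n2
    have := convex_aux lam mu hlam hmu _ _ (mem k) (mem l) x y hxy h1 h2 h3 h4
    rw [← hr] at this
    obtain ⟨a, ha⟩ := this
    have e1 := mono (x + y - ((T k).1 + (T k).2)) k a (by rw [ha]; exact h1)
      (by rw [ha]; exact h2) (by rw [ha]; dsimp only; omega)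
    have e2 := mono ((T l).1 + (T l).2 - (x + y)) a l (by rw [ha]; exact h3)
      (by rw [ha]; exact h4) (by rw [ha]; dsimp only; omega)
    refine ⟨a, lt_of_le_of_ne e1 ?_, lt_of_le_of_ne e2 ?_, ha⟩
    · rintro rfl; exact n1 ha.symm
    · rintro rfl; exact n2 ha.symm
  have up : ∃ a, k < a ∧ a < l ∧ (T a).2 - (T a).1 = (T k).2 - (T k).1 + 1 := by
    obtain ⟨a, h1, h2, h3⟩ := key (T k).1 ((T k).2 + 1) (by omega) (by omega) (by omega)
      (by omega) (by omega) (fun h => by have := congrArg Prod.snd h; dsimp only at this; omega)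
      (fun h => by have := congrArg Prod.fst h; dsimp only at this; omega)
    exact ⟨a, h1, h2, by rw [h3]; dsimp only; omega⟩
  refine ⟨fun h0 => ?_, fun h1 => ⟨?_, up⟩⟩
  · rw [h0] at up
    exact up
  · obtain ⟨a, h1, h2, h3⟩ := key ((T k).1 + 1) (T k).2 (by omega) (by omega) (by omega)
      (by omega) (by omega) (fun h => by have := congrArg Prod.fst h; dsimp only at this; omega)
      (fun h => by have := congrArg Prod.snd h; dsimp only at this; omega)
    exact ⟨a, h1, h2, by rw [h3]; dsimp only; omega⟩
end

section
/- For every splittable tuple i ∈ ℕ^n there exist strict partitions μ ⊆ λ such that the skew shifted Young diagram λ/μ has n cells, and a standard tableau T of shape λ/μ whose content sequence equals i. -/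
def StrictFn (f : ℕ → ℕ) : Prop :=
  (∀ r, f (r+1) < f r ∨ f r = 0 ∧ f (r+1) = 0) ∧ ∃ N, f N = 0

def cellsFn (f : ℕ → ℕ) : Set (ℕ × ℕ) :=
  {p : ℕ × ℕ | p.1 ≤ p.2 ∧ p.2 < p.1 + f p.1}

lemma StrictFn.lt {f : ℕ → ℕ} (hf : StrictFn f) (r d : ℕ) :
    f (r+d+1) < f r ∨ f r = 0 ∧ f (r+d+1) = 0 := by
  induction d with
  | zero => exact hf.1 r
  | succ d ih =>
    have := hf.1 (r+d+1)
    have e : r + (d+1) + 1 = r + d + 1 + 1 := by ring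
    rw [e]
    omega

lemma StrictFn.lt' {f : ℕ → ℕ} (hf : StrictFn f) {r s : ℕ} (h : r < s) :
    f s < f r ∨ f r = 0 ∧ f s = 0 := by
  obtain ⟨d, rfl⟩ := Nat.exists_eq_add_of_lt h
  exact hf.lt r d

lemma StrictFn.inj {f : ℕ → ℕ} (hf : StrictFn f) {r s : ℕ} (h : f r = f s) (h0 : f r ≠ 0) :
    r = s := by
  rcases lt_trichotomy r s with h1 | h1 | h1
  · have := hf.lt' h1; omega
  · exact h1
  · have := hf.lt' h1; omega

lemma StrictFn.toList {f : ℕ → ℕ} (hf : StrictFn f) :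
    ∃ l : List ℕ, StrictPartition l ∧ ∀ r, l.getD r 0 = f r := by
  classical
  have hN := Nat.find_spec hf.2
  have hm : ∀ m < Nat.find hf.2, f m ≠ 0 := fun m h => Nat.find_min hf.2 h
  generalize Nat.find hf.2 = N at hN hm
  refine ⟨(List.range N).map f, ⟨?_, ?_⟩, ?_⟩
  · show List.IsChain _ _
    rw [List.isChain_iff_getElem]
    intro i hi
    simp at hi ⊢
    have := hf.1 i
    have := hm i (by omega)
    omega
  · intro x hx
    simp at hx
    obtain ⟨a, ha, rfl⟩ := hx
    exact Nat.pos_of_ne_zero (hm a ha)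
  · intro r
    by_cases h : r < N
    · simp [List.getD, h]
    · have : f r = 0 := by
        rcases Nat.lt_or_ge N r with h1 | h1
        · have := hf.lt' h1; omega
        · have : r = N := by omega
          rw [this, hN]
      simp [List.getD, h, this]

lemma exists_strictFn (A : Finset ℕ) (hA : ∀ v ∈ A, 0 < v) :
    ∃ f, StrictFn f ∧ ∀ v, 0 < v → (v ∈ A ↔ ∃ r, f r = v) := by
  induction A using Finset.induction_on_max with
  | empty =>
    refine ⟨fun _ => 0, ⟨by simp, 0, rfl⟩, ?_⟩
    intro v hv
    simp
    omega
  | insert a s hs ih =>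
    obtain ⟨f, hf, h⟩ := ih (fun v hv => hA v (Finset.mem_insert_of_mem hv))
    have ha := hA a (Finset.mem_insert_self _ _)
    refine ⟨fun r => Nat.casesOn r a f, ⟨?_, ?_⟩, ?_⟩
    · intro r
      cases r with
      | zero =>
        left
        show f 0 < a
        rcases Nat.eq_zero_or_pos (f 0) with h0 | h0
        · omega
        · exact hs _ ((h _ h0).2 ⟨0, rfl⟩)
      | succ r => exact hf.1 r
    · obtain ⟨N, hN⟩ := hf.2
      exact ⟨N+1, hN⟩
    · intro v hv
      rw [Finset.mem_insert, h v hv]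
      constructor
      · rintro (rfl | ⟨r, hr⟩)
        · exact ⟨0, rfl⟩
        · exact ⟨r+1, hr⟩
      · rintro ⟨r, hr⟩
        cases r with
        | zero => left; exact hr.symm
        | succ r => right; exact ⟨r, hr⟩

def Compat {n : ℕ} (f : ℕ → ℕ) (i : Fin n → ℕ) : Prop :=
  (∀ a, (∀ b < a, i b ≠ i a ∧ i b ≠ i a + 1) → ∀ r, f r ≠ i a + 1) ∧
  (∀ a, 1 ≤ i a → (∀ b < a, i b ≠ i a ∧ i b + 1 ≠ i a) → ∃ r, f r = i a)

lemma core (n : ℕ) : ∀ (i : Fin n → ℕ) (f : ℕ → ℕ), StrictFn f → Splittable i → Compat f i →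
    ∃ (g : ℕ → ℕ) (T : Fin n → ℕ × ℕ), StrictFn g ∧ (∀ r, f r ≤ g r) ∧
      IsStandard (cellsFn g \ cellsFn f) T ∧ contentSeq T = i := by
  induction n with
  | zero =>
    intro i f hf _ _
    refine ⟨f, Fin.elim0, hf, fun _ => le_rfl, ⟨fun a => a.elim0, ?_, fun a => a.elim0,
      fun a => a.elim0⟩, funext fun a => a.elim0⟩
    simp
  | succ n ih =>
    intro i f hf hs hc
    obtain ⟨k, hk⟩ : ∃ k, i 0 = k := ⟨_, rfl⟩
    have h1 : ∀ r, f r ≠ k + 1 := by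
      rw [← hk]
      exact hc.1 0 (fun b hb => absurd hb (Fin.not_lt_zero b))
    obtain ⟨r, hr, hr0⟩ : ∃ r, f r = k ∧ ∀ s < r, k < f s := by
      rcases Nat.eq_zero_or_pos k with h0 | h0
      · classical
        refine ⟨Nat.find hf.2, ?_, ?_⟩
        · rw [Nat.find_spec hf.2, h0]
        · intro s hs'
          have := Nat.find_min hf.2 hs'
          omega
      · obtain ⟨r, hr⟩ := hc.2 0 (by omega) (fun b hb => absurd hb (Fin.not_lt_zero b))
        refine ⟨r, by omega, fun s hs' => ?_⟩
        have := hf.lt' hs'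
        omega
    obtain ⟨f', hf'⟩ : ∃ f', f' = Function.update f r (k+1) := ⟨_, rfl⟩
    have e1 : f' r = k + 1 := by simp [hf']
    have e2 : ∀ s, s ≠ r → f' s = f s := by
      intro s h; simp [hf', h]
    have hstr : StrictFn f' := by
      constructor
      · intro s
        have h2 := hf.1 s
        rcases eq_or_ne s r with rfl | h
        · rw [e1, e2 (s+1) (by omega)]; omega
        · rw [e2 s h]
          rcases eq_or_ne (s+1) r with h' | h'
          · have := hr0 s (by omega)
            have := h1 s
            rw [h', e1]; omega
          · rw [e2 _ h']; exact h2
      · obtain ⟨N, hN⟩ := hf.2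
        refine ⟨N + r + 1, ?_⟩
        rw [e2 _ (by omega)]
        have := hf.lt' (show N < N + r + 1 by omega)
        omega
    -- next occurrence of k in the tail
    have hnext : ∀ a : Fin n, i a.succ = k →
        (∃ b < a, i b.succ = k + 1) ∧ (1 ≤ k → ∃ b < a, i b.succ + 1 = k) := by
      intro a ha
      have h := hs 0 a.succ (Fin.succ_pos a) (by rw [hk, ha])
      rw [hk] at h
      have key : ∀ p : ℕ → Prop, (∃ c, 0 < c ∧ c < a.succ ∧ p (i c)) →
          ∃ b < a, p (i b.succ) := by
        rintro p ⟨c, hc0, hc1, hp⟩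
        obtain ⟨b, rfl⟩ := Fin.exists_succ_eq.2 hc0.ne'
        exact ⟨b, Fin.succ_lt_succ_iff.1 hc1, hp⟩
      refine ⟨?_, fun h0 => key (fun x => x + 1 = k) (h.2 h0).1⟩
      rcases Nat.eq_zero_or_pos k with h0 | h0
      · refine key (fun x => x = k + 1) ?_
        rw [h0]
        exact h.1 h0
      · exact key (fun x => x = k + 1) (h.2 h0).2
    have hs' : Splittable (fun a : Fin n => i a.succ) := by
      intro a b hab he
      have h := hs a.succ b.succ (Fin.succ_lt_succ_iff.2 hab) he
      have key : ∀ p : ℕ → Prop, (∃ c, a.succ < c ∧ c < b.succ ∧ p (i c)) →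
          ∃ c, a < c ∧ c < b ∧ p (i c.succ) := by
        rintro p ⟨c, hc0, hc1, hp⟩
        obtain ⟨d, rfl⟩ := Fin.exists_succ_eq.2 ((Fin.succ_pos a).trans hc0).ne'
        exact ⟨d, Fin.succ_lt_succ_iff.1 hc0, Fin.succ_lt_succ_iff.1 hc1, hp⟩
      exact ⟨fun h0 => key (fun x => x = 1) (h.1 h0),
        fun h0 => ⟨key (fun x => x + 1 = i a.succ) (h.2 h0).1,
          key (fun x => x = i a.succ + 1) (h.2 h0).2⟩⟩
    have hc' : Compat f' (fun a : Fin n => i a.succ) := by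
      constructor
      · intro a ha s
        dsimp only at ha ⊢
        by_cases c1 : i a.succ = k
        · obtain ⟨b, hb, hb'⟩ := (hnext a c1).1
          exact absurd (by rw [hb', c1]) (ha b hb).2
        by_cases c2 : k = i a.succ + 1
        · rcases eq_or_ne s r with rfl | h
          · omega
          · rw [e2 s h]
            intro h3
            exact h (hf.inj (by omega) (by omega))
        · rcases eq_or_ne s r with rfl | h
          · omega
          · rw [e2 s h]
            refine hc.1 a.succ ?_ s
            intro b hb
            cases b using Fin.cases with
            | zero => rw [hk]; omega
            | succ b => exact ha b (Fin.succ_lt_succ_iff.1 hb)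
      · intro a h0 ha
        dsimp only at h0 ha ⊢
        by_cases c1 : i a.succ = k
        · obtain ⟨b, hb, hb'⟩ := (hnext a c1).2 (by omega)
          exact absurd (by rw [hb', c1]) (ha b hb).2
        by_cases c2 : k + 1 = i a.succ
        · exact ⟨r, by omega⟩
        · obtain ⟨s, hs⟩ := hc.2 a.succ h0 (by
            intro b hb
            cases b using Fin.cases with
            | zero => rw [hk]; omega
            | succ b => exact ha b (Fin.succ_lt_succ_iff.1 hb))
          refine ⟨s, ?_⟩
          rw [e2 s (by rintro rfl; omega)]
          exact hs
    obtain ⟨g, T, hg, hle, ⟨hinj, hran, hrow, hcol⟩, hcon⟩ := ih _ f' hstr hs' hc'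
    have hmem : ∀ a, T a ∈ cellsFn g \ cellsFn f' := fun a => hran ▸ Set.mem_range_self a
    have hcell : ∀ p, p ∈ cellsFn f' ↔ p = (r, r + k) ∨ p ∈ cellsFn f := by
      rintro ⟨x, y⟩
      simp only [cellsFn, Set.mem_setOf_eq, Prod.mk.injEq]
      rcases eq_or_ne x r with rfl | h
      · rw [e1]; omega
      · rw [e2 x h]; omega
    have hnf : (r, r + k) ∉ cellsFn f := by
      simp only [cellsFn, Set.mem_setOf_eq]; omega
    have hnot : ∀ a, T a ≠ (r, r + k) := by
      intro a h
      exact (hmem a).2 ((hcell _).2 (Or.inl h))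
    refine ⟨g, Fin.cons (r, r + k) T, hg, ?_, ⟨?_, ?_, ?_, ?_⟩, ?_⟩
    · intro s
      have := hle s
      rcases eq_or_ne s r with rfl | h
      · omega
      · rw [← e2 s h]; exact this
    · rw [Fin.cons_injective_iff]
      exact ⟨by rintro ⟨a, ha⟩; exact hnot a ha, hinj⟩
    · rw [Fin.range_cons, hran]
      ext p
      simp only [Set.mem_insert_iff, Set.mem_diff, hcell]
      constructor
      · rintro (rfl | ⟨h2, h3⟩)
        · refine ⟨?_, hnf⟩
          have := hle r
          simp only [cellsFn, Set.mem_setOf_eq]; omega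
        · exact ⟨h2, fun h => h3 (Or.inr h)⟩
      · rintro ⟨h2, h3⟩
        tauto
    · intro a b
      cases a using Fin.cases with
      | zero =>
        cases b using Fin.cases with
        | zero => simp
        | succ b => intro _ _; exact Fin.succ_pos b
      | succ a =>
        cases b using Fin.cases with
        | zero =>
          simp only [Fin.cons_zero, Fin.cons_succ]
          intro h2 h3
          exfalso
          have h4 := hmem a
          simp only [cellsFn, Set.mem_diff, Set.mem_setOf_eq, ← h2, e1] at h4
          omega
        | succ b =>
          simp only [Fin.cons_succ, Fin.succ_lt_succ_iff]
          exact hrow a b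
    · intro a b
      cases a using Fin.cases with
      | zero =>
        cases b using Fin.cases with
        | zero => simp
        | succ b => intro _ _; exact Fin.succ_pos b
      | succ a =>
        cases b using Fin.cases with
        | zero =>
          simp only [Fin.cons_zero, Fin.cons_succ]
          intro h2 h3
          exfalso
          have h4 := hmem a
          simp only [cellsFn, Set.mem_diff, Set.mem_setOf_eq] at h4
          have h5 := hstr.1 (T a).1
          rw [← h2, e1] at h5
          omega
        | succ b =>
          simp only [Fin.cons_succ, Fin.succ_lt_succ_iff]
          exact hcol a b
    · funext a
      cases a using Fin.cases with
      | zero => simp [contentSeq, hk]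
      | succ a => exact congrFun hcon a

/-- every splittable tuple is the content sequence of some standard
tableau of some skew shifted Young diagram with `n` cells. -/
theorem splittable_is_content_seq (n : ℕ) (i : Fin n → ℕ) (hi : Splittable i) :
    ∃ (lam mu : List ℕ) (T : Fin n → ℕ × ℕ),
      StrictPartition lam ∧ StrictPartition mu ∧
      (∀ r, mu.getD r 0 ≤ lam.getD r 0) ∧
      IsStandard (shiftedCells lam \ shiftedCells mu) T ∧
      contentSeq T = i := by
  classical
  obtain ⟨f, hf, hA⟩ := exists_strictFn
    ((Finset.univ.filter (fun a : Fin n =>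
      1 ≤ i a ∧ ∀ b < a, i b ≠ i a ∧ i b + 1 ≠ i a)).image i) (by
      intro v hv
      simp only [Finset.mem_image, Finset.mem_filter] at hv
      obtain ⟨a, ha, rfl⟩ := hv
      exact ha.2.1)
  have hc : Compat f i := by
    constructor
    · intro a ha r hr
      have h := (hA (i a + 1) (by omega)).2 ⟨r, hr⟩
      simp only [Finset.mem_image, Finset.mem_filter] at h
      obtain ⟨b, ⟨_, _, hb⟩, hb'⟩ := h
      rcases lt_trichotomy a b with h1 | h1 | h1
      · exact (hb a h1).2 hb'.symm
      · subst h1; omega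
      · exact (ha b h1).2 hb'
    · intro a h0 ha
      refine (hA (i a) h0).1 ?_
      simp only [Finset.mem_image, Finset.mem_filter]
      exact ⟨a, ⟨Finset.mem_univ _, h0, ha⟩, rfl⟩
  obtain ⟨g, T, hg, hle, hT, hcon⟩ := core n i f hf hi hc
  obtain ⟨lam, hl, hl'⟩ := hg.toList
  obtain ⟨mu, hm, hm'⟩ := hf.toList
  refine ⟨lam, mu, T, hl, hm, fun r => by rw [hl', hm']; exact hle r, ?_, hcon⟩
  have e1 : shiftedCells lam = cellsFn g := by
    ext p; simp only [shiftedCells, cellsFn, hl']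
  have e2 : shiftedCells mu = cellsFn f := by
    ext p; simp only [shiftedCells, cellsFn, hm']
  rw [e1, e2]
  exact hT
end

section
/- Let D be the cell set of a skew shifted Young diagram with n cells. If T and S are standard tableaux of shape D that have the same content sequence, then T = S. -/
theorem sp_succ {l : List ℕ} (h : StrictPartition l) (r : ℕ) (hr : 0 < l.getD (r+1) 0) :
    l.getD (r+1) 0 < l.getD r 0 := by
  have hlt : r + 1 < l.length := by
    by_contra hc
    rw [List.getD_eq_default _ _ (by omega)] at hr
    omega
  have h1 := List.isChain_iff_getElem.1 h.1 r hlt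
  rw [List.getD_eq_getElem _ _ hlt, List.getD_eq_getElem _ _ (by omega)]
  exact h1

theorem sp_anti {l : List ℕ} (h : StrictPartition l) : Antitone (fun r => l.getD r 0) := by
  apply antitone_nat_of_succ_le
  intro r
  by_cases hr : 0 < l.getD (r+1) 0
  · exact (sp_succ h r hr).le
  · show l.getD (r+1) 0 ≤ _
    omega

theorem diag_lt {n : ℕ} {D : Set (ℕ × ℕ)} (hD : IsSkewShifted D) {T : Fin n → ℕ × ℕ}
    (hT : IsStandard D T) (c d : ℕ) : ∀ (r : ℕ) (k l : Fin n), T k = (r, r + c) →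
      T l = (r + d + 1, r + d + 1 + c) → k < l := by
  obtain ⟨lam, mu, hl, hm, -, rfl⟩ := hD
  obtain ⟨-, hr, h1, h2⟩ := hT
  have mem : ∀ a b : ℕ, (a, a + b) ∈ shiftedCells lam \ shiftedCells mu ↔
      b < lam.getD a 0 ∧ mu.getD a 0 ≤ b := by
    intro a b
    simp only [shiftedCells, Set.mem_diff, Set.mem_setOf_eq]
    omega
  have step : ∀ (r : ℕ) (k l : Fin n), T k = (r, r + c) →
      T l = (r + 1, r + 1 + c) → k < l := by
    intro r k l hk hl'
    have ek := (mem r c).1 (by rw [← hr, ← hk]; exact ⟨k, rfl⟩)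
    have el := (mem (r+1) c).1 (by rw [← hr, ← hl']; exact ⟨l, rfl⟩)
    have := sp_succ hl r (by omega)
    have em := (mem r (c+1)).2 (by omega)
    rw [← hr] at em
    obtain ⟨m, hm'⟩ := em
    have a1 := h1 k m (by rw [hk, hm']) (by rw [hk, hm']; show r + (c+1) = r + c + 1; omega)
    have a2 := h2 m l (by rw [hl', hm']) (by rw [hl', hm']; show r + 1 + c = r + (c+1); omega)
    exact a1.trans a2
  induction d with
  | zero => exact step
  | succ d ih =>
    intro r k l hk hl'
    have ek := (mem r c).1 (by rw [← hr, ← hk]; exact ⟨k, rfl⟩)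
    have el := (mem (r+(d+1)+1) c).1 (by rw [← hr, ← hl']; exact ⟨l, rfl⟩)
    have b1 : lam.getD (r+(d+1)+1) 0 ≤ lam.getD (r+1) 0 :=
      sp_anti hl (show r + 1 ≤ r+(d+1)+1 by omega)
    have b2 : mu.getD (r+1) 0 ≤ mu.getD r 0 := sp_anti hm (show r ≤ r + 1 by omega)
    have em := (mem (r+1) c).2 (by omega)
    rw [← hr] at em
    obtain ⟨m, hm'⟩ := em
    refine (step r k m hk hm').trans (ih (r+1) m l hm' ?_)
    rw [hl']
    ext <;> simp <;> omega

theorem diag_lt2 {n : ℕ} {D : Set (ℕ × ℕ)} (hD : IsSkewShifted D) {T : Fin n → ℕ × ℕ}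
    (hT : IsStandard D T) (r s c : ℕ) (hrs : r < s) (k l : Fin n) (hk : T k = (r, r + c))
    (hl : T l = (s, s + c)) : k < l := by
  obtain ⟨d, rfl⟩ := Nat.exists_eq_add_of_lt hrs
  exact diag_lt hD hT c d r k l hk hl

theorem tab_le {n : ℕ} {D : Set (ℕ × ℕ)} (hD : IsSkewShifted D) {T S : Fin n → ℕ × ℕ}
    (hT : IsStandard D T) (hS : IsStandard D S) (k : Fin n) (ih : ∀ l < k, T l = S l)
    (r s c : ℕ) (hk : T k = (r, r + c)) (hl : S k = (s, s + c)) : s ≤ r := by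
  by_contra hc
  have : T k ∈ Set.range S := by rw [hS.2.1, ← hT.2.1]; exact ⟨k, rfl⟩
  obtain ⟨l, hl'⟩ := this
  have hlt := diag_lt2 hD hS r s c (by omega) l k (hl'.trans hk) hl
  have := hT.1 ((ih l hlt).trans hl')
  exact absurd this hlt.ne

theorem tab_le_fst {n : ℕ} {D : Set (ℕ × ℕ)} (hD : IsSkewShifted D) {T : Fin n → ℕ × ℕ}
    (hT : IsStandard D T) (k : Fin n) : (T k).1 ≤ (T k).2 := by
  obtain ⟨lam, mu, -, -, -, rfl⟩ := hD
  have : T k ∈ Set.range T := ⟨k, rfl⟩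
  rw [hT.2.1] at this
  exact this.1.1

/-- a standard tableau of a skew shifted shape is determined by
its content sequence. -/
theorem standard_tableau_eq_of_content_seq_eq (n : ℕ) (D : Set (ℕ × ℕ))
    (hD : IsSkewShifted D) (T S : Fin n → ℕ × ℕ)
    (hT : IsStandard D T) (hS : IsStandard D S)
    (h : contentSeq T = contentSeq S) : T = S := by
  funext k
  induction k using WellFoundedLT.induction with
  | ind k ih =>
    have hc : (T k).2 - (T k).1 = (S k).2 - (S k).1 := congrFun h k
    have t1 := tab_le_fst hD hT k
    have s1 := tab_le_fst hD hS k
    have e1 : T k = ((T k).1, (T k).1 + ((T k).2 - (T k).1)) := by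
      ext
      · rfl
      · show _ = _ + _
        omega
    have e2 : S k = ((S k).1, (S k).1 + ((T k).2 - (T k).1)) := by
      ext
      · rfl
      · show _ = _ + _
        omega
    have l1 := tab_le hD hT hS k ih _ _ _ e1 e2
    have l2 := tab_le hD hS hT k (fun l hl => (ih l hl).symm) _ _ _ e2 e1
    ext <;> omega
end

section
/- Let D be the cell set of a skew shifted Young diagram with n cells and let T and S be two standard tableaux of shape D. Then the content sequence of T and the content sequence of S are equivalent under admissible transpositions. -/
theorem sp_step (l : List ℕ) (h : StrictPartition l) (a : ℕ) (hp : 0 < l.getD (a+1) 0) :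
    l.getD (a+1) 0 < l.getD a 0 := by
  have hl : a + 1 < l.length := by
    by_contra hc
    rw [List.getD_eq_default _ _ (by omega)] at hp
    omega
  have h1 := List.isChain_iff_getElem.mp h.1 a hl
  rw [List.getD_eq_getElem _ _ hl, List.getD_eq_getElem _ _ (by omega)]
  exact h1

theorem sp_mono (l : List ℕ) (h : StrictPartition l) (a d : ℕ) (hp : 0 < l.getD (a+d) 0) :
    a + d + l.getD (a+d) 0 ≤ a + l.getD a 0 := by
  induction d with
  | zero => simp
  | succ d ih =>
    have := sp_step l h (a+d) hp
    have h2 := ih (by omega)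
    have e : a + (d+1) = a + d + 1 := by omega
    rw [e]
    omega

theorem skew_convex {D : Set (ℕ × ℕ)} (hD : IsSkewShifted D) {p m q : ℕ × ℕ}
    (hp : p ∈ D) (hq : q ∈ D) (h1 : p.1 ≤ m.1) (h2 : p.2 ≤ m.2) (h3 : m.1 ≤ q.1)
    (h4 : m.2 ≤ q.2) (hm : m.1 ≤ m.2) : m ∈ D := by
  obtain ⟨lam, mu, hl, hmu, -, rfl⟩ := hD
  simp only [shiftedCells, Set.mem_diff, Set.mem_setOf_eq] at *
  obtain ⟨d, hd⟩ := Nat.exists_eq_add_of_le h1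
  obtain ⟨e, he⟩ := Nat.exists_eq_add_of_le h3
  have A := sp_mono lam hl m.1 e
  have B := sp_mono mu hmu p.1 d
  rw [← he] at A
  rw [← hd] at B
  refine ⟨⟨hm, ?_⟩, ?_⟩
  · have := A (by omega)
    omega
  · rintro ⟨-, h⟩
    have := B (by omega)
    exact hp.2 ⟨hp.1.1, by omega⟩

theorem skew_diag {D : Set (ℕ × ℕ)} (hD : IsSkewShifted D) {p : ℕ × ℕ}
    (hp : p ∈ D) : p.1 ≤ p.2 := by
  obtain ⟨lam, mu, hl, hmu, -, rfl⟩ := hD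
  exact hp.1.1

theorem std_lt {n : ℕ} {D : Set (ℕ × ℕ)} (hD : IsSkewShifted D) {T : Fin n → ℕ × ℕ}
    (hT : IsStandard D T) (d : ℕ) : ∀ k l : Fin n, (T k).1 ≤ (T l).1 → (T k).2 ≤ (T l).2 →
    (T l).1 + (T l).2 = (T k).1 + (T k).2 + d → k ≤ l := by
  have hmem : ∀ k, T k ∈ D := fun k => hT.2.1 ▸ Set.mem_range_self k
  induction d with
  | zero =>
    intro k l h1 h2 h3
    exact le_of_eq (hT.1 (Prod.ext (by omega) (by omega)))
  | succ d ih =>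
    intro k l h1 h2 h3
    have hk := skew_diag hD (hmem k)
    have hl := skew_diag hD (hmem l)
    by_cases hc : (T k).2 < (T l).2
    · have hm : ((T k).1, (T k).2 + 1) ∈ D :=
        skew_convex hD (hmem k) (hmem l) (by simp) (by simp) (by simpa) (by simpa) (by simp; omega)
      rw [← hT.2.1] at hm
      obtain ⟨m, hm⟩ := hm
      have a := hT.2.2.1 k m (by rw [hm]) (by rw [hm])
      have b := ih m l (by rw [hm]; simpa) (by rw [hm]; simpa) (by rw [hm]; simp only; omega)
      exact a.le.trans b
    · have hm : ((T k).1 + 1, (T k).2) ∈ D :=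
        skew_convex hD (hmem k) (hmem l) (by simp) (by simp) (by simp only; omega)
          (by simpa) (by simp only; omega)
      rw [← hT.2.1] at hm
      obtain ⟨m, hm⟩ := hm
      have a := hT.2.2.2 k m (by rw [hm]) (by rw [hm])
      have b := ih m l (by rw [hm]; simp only; omega) (by rw [hm]; simpa)
        (by rw [hm]; simp only; omega)
      exact a.le.trans b

theorem std_le {n : ℕ} {D : Set (ℕ × ℕ)} (hD : IsSkewShifted D) {T : Fin n → ℕ × ℕ}
    (hT : IsStandard D T) (k l : Fin n) (h1 : (T k).1 ≤ (T l).1) (h2 : (T k).2 ≤ (T l).2) :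
    k ≤ l :=
  std_lt hD hT ((T l).1 + (T l).2 - ((T k).1 + (T k).2)) k l h1 h2 (by omega)

theorem swap_lt {n : ℕ} (k : ℕ) (hk : k + 1 < n) (x y : Fin n)
    (h : Equiv.swap (⟨k, Nat.lt_of_succ_lt hk⟩ : Fin n) ⟨k + 1, hk⟩ x <
      Equiv.swap (⟨k, Nat.lt_of_succ_lt hk⟩ : Fin n) ⟨k + 1, hk⟩ y) :
    x < y ∨ (Equiv.swap (⟨k, Nat.lt_of_succ_lt hk⟩ : Fin n) ⟨k + 1, hk⟩ x = ⟨k, Nat.lt_of_succ_lt hk⟩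
      ∧ Equiv.swap (⟨k, Nat.lt_of_succ_lt hk⟩ : Fin n) ⟨k + 1, hk⟩ y = ⟨k+1, hk⟩) := by
  revert h
  simp only [Equiv.swap_apply_def]
  split_ifs <;> intro h <;> simp only [Fin.ext_iff, Fin.lt_def] at * <;> first | omega | (right; simp)

theorem sum_swap_lt {n : ℕ} (k : ℕ) (hk : k + 1 < n) (f : Fin n → ℕ)
    (h : f ⟨k+1, hk⟩ < f ⟨k, Nat.lt_of_succ_lt hk⟩) :
    ∑ x : Fin n, (x : ℕ) * f x <
    ∑ x : Fin n, (x : ℕ) * f (Equiv.swap (⟨k, Nat.lt_of_succ_lt hk⟩ : Fin n) ⟨k + 1, hk⟩ x) := by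
  set a : Fin n := ⟨k, Nat.lt_of_succ_lt hk⟩ with ha
  set b : Fin n := ⟨k+1, hk⟩ with hb
  have hab : a ≠ b := by simp [ha, hb]
  have hbm : b ∈ Finset.univ.erase a := by simp [hab.symm]
  rw [← Finset.add_sum_erase _ _ (Finset.mem_univ a), ← Finset.add_sum_erase _ _ hbm,
    ← Finset.add_sum_erase _ (fun x : Fin n => (x : ℕ) * f (Equiv.swap a b x)) (Finset.mem_univ a),
    ← Finset.add_sum_erase _ (fun x : Fin n => (x : ℕ) * f (Equiv.swap a b x)) hbm]
  have : ∑ x ∈ (Finset.univ.erase a).erase b, (x : ℕ) * f (Equiv.swap a b x)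
      = ∑ x ∈ (Finset.univ.erase a).erase b, (x : ℕ) * f x := by
    refine Finset.sum_congr rfl fun x hx => ?_
    simp only [Finset.mem_erase, Finset.mem_univ, and_true] at hx
    rw [Equiv.swap_apply_of_ne_of_ne hx.2 hx.1]
  rw [this]
  simp only [Equiv.swap_apply_left, Equiv.swap_apply_right]
  have e1 : (a : ℕ) = k := rfl
  have e2 : (b : ℕ) = k + 1 := rfl
  rw [e1, e2]
  nlinarith

theorem no_descent {n : ℕ} (σ : Equiv.Perm (Fin n))
    (h : ∀ (k : ℕ) (hk : k + 1 < n), σ ⟨k, Nat.lt_of_succ_lt hk⟩ ≤ σ ⟨k+1, hk⟩) : σ = 1 := by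
  have hm : StrictMono σ := by
    cases n with
    | zero => intro x; exact x.elim0
    | succ n =>
      rw [Fin.strictMono_iff_lt_succ]
      intro i
      refine lt_of_le_of_ne (h i (by omega)) ?_
      intro he
      have := σ.injective he
      simp [Fin.ext_iff] at this
  have := (StrictMono.range_inj hm strictMono_id).mp (by simp)
  ext x
  simp [this]

theorem main_ind {n : ℕ} {D : Set (ℕ × ℕ)} (hD : IsSkewShifted D) {S : Fin n → ℕ × ℕ}
    (hS : IsStandard D S) (N : ℕ) : ∀ σ : Equiv.Perm (Fin n), IsStandard D (S ∘ σ) →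
    n * (n * n) - ∑ x : Fin n, (x : ℕ) * (σ x : ℕ) = N →
    EquivTuples (contentSeq (S ∘ σ)) (contentSeq S) := by
  induction N using Nat.strong_induction_on with
  | _ N ih =>
  intro σ hT hN
  by_cases hd : ∀ (k : ℕ) (hk : k + 1 < n), σ ⟨k, Nat.lt_of_succ_lt hk⟩ ≤ σ ⟨k+1, hk⟩
  · rw [no_descent σ hd]
    exact Relation.ReflTransGen.refl
  push Not at hd
  obtain ⟨k, hk, hlt⟩ := hd
  have hmem : ∀ k, (S ∘ σ) k ∈ D := fun k => hT.2.1 ▸ Set.mem_range_self k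
  have key1 : ¬ (((S ∘ σ) ⟨k, Nat.lt_of_succ_lt hk⟩).1 ≤ ((S ∘ σ) ⟨k+1, hk⟩).1 ∧
      ((S ∘ σ) ⟨k, Nat.lt_of_succ_lt hk⟩).2 ≤ ((S ∘ σ) ⟨k+1, hk⟩).2) := fun ⟨h1, h2⟩ =>
    absurd (std_le hD hS _ _ h1 h2) (not_le.mpr hlt)
  have key2 : ¬ (((S ∘ σ) ⟨k+1, hk⟩).1 ≤ ((S ∘ σ) ⟨k, Nat.lt_of_succ_lt hk⟩).1 ∧
      ((S ∘ σ) ⟨k+1, hk⟩).2 ≤ ((S ∘ σ) ⟨k, Nat.lt_of_succ_lt hk⟩).2) := fun ⟨h1, h2⟩ =>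
    absurd (std_le hD hT _ _ h1 h2) (by simp [Fin.le_def])
  have d1 := skew_diag hD (hmem ⟨k, Nat.lt_of_succ_lt hk⟩)
  have d2 := skew_diag hD (hmem ⟨k+1, hk⟩)
  have hsum := sum_swap_lt k hk (fun x => (σ x : ℕ)) hlt
  have hbd : ∀ τ : Equiv.Perm (Fin n), ∑ x : Fin n, (x : ℕ) * (τ x : ℕ) ≤ n * (n * n) := by
    intro τ
    calc _ ≤ ∑ x : Fin n, n * n :=
          Finset.sum_le_sum fun x _ => Nat.mul_le_mul x.2.le (τ x).2.le
      _ = _ := by simp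
  have hb := hbd (σ * Equiv.swap (⟨k, Nat.lt_of_succ_lt hk⟩ : Fin n) ⟨k + 1, hk⟩)
  simp only [Equiv.Perm.mul_apply] at hb
  refine Relation.ReflTransGen.head (b := contentSeq (S ∘ (σ * Equiv.swap (⟨k, Nat.lt_of_succ_lt hk⟩ : Fin n) ⟨k + 1, hk⟩ : Equiv.Perm (Fin n)))) ⟨k, hk, ?_, ?_, rfl⟩ (ih _ ?_ _ ?_ rfl)
  · simp only [contentSeq]
    omega
  · simp only [contentSeq]
    omega
  · simp only [Equiv.Perm.mul_apply]
    omega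
  · refine ⟨hS.1.comp (Equiv.injective _), ?_, ?_, ?_⟩
    · rw [(Equiv.surjective _).range_comp]
      exact hS.2.1
    · intro x y h1 h2
      rcases swap_lt k hk x y (hT.2.2.1 _ _ h1 h2) with h | ⟨h3, h4⟩
      · exact h
      · exfalso
        simp only [Function.comp, Equiv.Perm.mul_apply, h3, h4] at h1 h2 key1
        omega
    · intro x y h1 h2
      rcases swap_lt k hk x y (hT.2.2.2 _ _ h1 h2) with h | ⟨h3, h4⟩
      · exact h
      · exfalso
        simp only [Function.comp, Equiv.Perm.mul_apply, h3, h4] at h1 h2 key1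
        omega

/-- the content sequences of any two standard tableaux of the same
skew shifted shape are equivalent under admissible transpositions. -/
theorem content_seqs_equivalent (n : ℕ) (D : Set (ℕ × ℕ))
    (hD : IsSkewShifted D) (T S : Fin n → ℕ × ℕ)
    (hT : IsStandard D T) (hS : IsStandard D S) :
    EquivTuples (contentSeq T) (contentSeq S) := by
  have hex : ∀ k, ∃ l, S l = T k := fun k => by
    have : T k ∈ Set.range S := by rw [hS.2.1, ← hT.2.1]; exact Set.mem_range_self k
    exact this
  choose f hf using hex
  have hinj : Function.Injective f := fun x y h => hT.1 (by rw [← hf x, ← hf y, h])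
  have hbij : Function.Bijective f := Finite.injective_iff_bijective.mp hinj
  have hTe : T = S ∘ (Equiv.ofBijective f hbij) := by
    funext k
    simp [hf]
  rw [hTe] at hT ⊢
  exact main_ind hD hS _ _ hT rfl
end

section
/- Let D be the cell set of a skew shifted Young diagram with n cells, let T be a standard tableau of shape D with content sequence i, and let j ∈ ℕ^n with i ∼ j (equivalent under admissible transpositions). Then j is the content sequence of some standard tableau of shape D. -/
theorem swap_lt_aux {n k : ℕ} (hk : k + 1 < n) (a b : Fin n)
    (h : Equiv.swap (⟨k, Nat.lt_of_succ_lt hk⟩ : Fin n) ⟨k + 1, hk⟩ a <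
      Equiv.swap (⟨k, Nat.lt_of_succ_lt hk⟩ : Fin n) ⟨k + 1, hk⟩ b)
    (hne : ¬ (Equiv.swap (⟨k, Nat.lt_of_succ_lt hk⟩ : Fin n) ⟨k + 1, hk⟩ a
        = ⟨k, Nat.lt_of_succ_lt hk⟩ ∧
      Equiv.swap (⟨k, Nat.lt_of_succ_lt hk⟩ : Fin n) ⟨k + 1, hk⟩ b = ⟨k + 1, hk⟩)) :
    a < b := by
  rw [Equiv.swap_apply_def, Equiv.swap_apply_def] at h hne
  simp only [Fin.ext_iff, Fin.lt_def] at *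
  split_ifs at * <;> simp_all <;> omega

theorem step_aux {n : ℕ} (D : Set (ℕ × ℕ)) (hD : IsSkewShifted D) (T : Fin n → ℕ × ℕ)
    (hT : IsStandard D T) (j : Fin n → ℕ) (hj : AdmissibleSwap (contentSeq T) j) :
    ∃ S : Fin n → ℕ × ℕ, IsStandard D S ∧ contentSeq S = j := by
  obtain ⟨k, hk, h1, h2, rfl⟩ := hj
  obtain ⟨inj, rng, hr, hc⟩ := hT
  have hle : ∀ a, (T a).1 ≤ (T a).2 := by
    intro a
    have ha : T a ∈ D := rng ▸ Set.mem_range_self a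
    obtain ⟨lam, mu, -, -, -, rfl⟩ := hD
    exact ha.1.1
  refine ⟨T ∘ Equiv.swap ⟨k, Nat.lt_of_succ_lt hk⟩ ⟨k + 1, hk⟩,
    ⟨inj.comp (Equiv.injective _), ?_, ?_, ?_⟩, rfl⟩
  · rw [(Equiv.surjective _).range_comp, rng]
  · intro a b e1 e2
    refine swap_lt_aux hk a b (hr _ _ e1 e2) ?_
    rintro ⟨ea, eb⟩
    simp only [Function.comp, ea, eb, contentSeq] at *
    have := hle ⟨k, Nat.lt_of_succ_lt hk⟩
    omega
  · intro a b e1 e2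
    refine swap_lt_aux hk a b (hc _ _ e1 e2) ?_
    rintro ⟨ea, eb⟩
    simp only [Function.comp, ea, eb, contentSeq] at *
    have := hle ⟨k + 1, hk⟩
    omega

/-- any tuple equivalent under admissible transpositions to the
content sequence of a standard tableau of a skew shifted shape `D` is itself
the content sequence of a standard tableau of shape `D`. -/
theorem equiv_tuple_is_content_seq (n : ℕ) (D : Set (ℕ × ℕ))
    (hD : IsSkewShifted D) (T : Fin n → ℕ × ℕ) (hT : IsStandard D T)
    (j : Fin n → ℕ) (hj : EquivTuples (contentSeq T) j) :
    ∃ S : Fin n → ℕ × ℕ, IsStandard D S ∧ contentSeq S = j := by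
  unfold EquivTuples at hj
  induction hj with
  | refl => exact ⟨T, hT, rfl⟩
  | tail _ h ih =>
    obtain ⟨S, hS, rfl⟩ := ih
    exact step_aux D hD S hS _ h
end

section
/- Let i ∈ ℕ^n be a splittable tuple. Let P_i be the set of permutations τ in the symmetric group S_n that can be written as τ = s_{k_t}···s_{k_1} where, for each 1 ≤ l ≤ t, the simple transposition s_{k_l} is admissible with respect to s_{k_{l−1}}···s_{k_1}·i (for permutations, τ·i denotes the tuple (i_{τ^{−1}(1)},…,i_{τ^{−1}(n)})). Then the map τ ↦ τ·i is a bijection from P_i onto the equivalence class {j ∈ ℕ^n : j ∼ i}; in particular, if τ ∈ P_i satisfies τ·i = i then τ is the identity permutation. -/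
/-- The action `τ·i = (i_{τ⁻¹(1)},…,i_{τ⁻¹(n)})` of a permutation on a tuple. -/
def permAct {n : ℕ} (τ : Equiv.Perm (Fin n)) (i : Fin n → ℕ) : Fin n → ℕ :=
  i ∘ τ.symm

/-- The set `P_i` of permutations expressible as `s_{k_t}···s_{k_1}` where each
`s_{k_l}` is admissible with respect to `s_{k_{l-1}}···s_{k_1}·i`. -/
inductive InP {n : ℕ} (i : Fin n → ℕ) : Equiv.Perm (Fin n) → Prop
  | one : InP i 1
  | step (τ : Equiv.Perm (Fin n)) (k : ℕ) (hk : k + 1 < n) :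
      InP i τ →
      permAct τ i ⟨k, Nat.lt_of_succ_lt hk⟩ ≠ permAct τ i ⟨k + 1, hk⟩ + 1 →
      permAct τ i ⟨k + 1, hk⟩ ≠ permAct τ i ⟨k, Nat.lt_of_succ_lt hk⟩ + 1 →
      InP i (Equiv.swap ⟨k, Nat.lt_of_succ_lt hk⟩ ⟨k + 1, hk⟩ * τ)

theorem inP_nbr {n : ℕ} (i : Fin n → ℕ) {τ : Equiv.Perm (Fin n)} (h : InP i τ) :
    ∀ a b : Fin n, a < b → (i a = i b + 1 ∨ i b = i a + 1) → τ a < τ b := by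
  induction h with
  | one => intro a b hab _; simpa using hab
  | step τ k hk hP h1 h2 ih =>
    intro a b hab hn
    have hlt := ih a b hab hn
    simp only [permAct, Function.comp] at h1 h2
    have key : ¬ (τ a = ⟨k, Nat.lt_of_succ_lt hk⟩ ∧ τ b = ⟨k + 1, hk⟩) := by
      rintro ⟨ha, hb⟩
      rw [← ha, ← hb, Equiv.symm_apply_apply, Equiv.symm_apply_apply] at h1 h2
      tauto
    rw [Equiv.Perm.mul_apply, Equiv.Perm.mul_apply]
    generalize τ a = x at *
    generalize τ b = y at *
    simp only [Equiv.swap_apply_def]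
    simp only [Fin.ext_iff, Fin.lt_def] at *
    split_ifs <;> (try dsimp only) <;> omega

theorem inP_eq {n : ℕ} (i : Fin n → ℕ) (hi : Splittable i) {τ : Equiv.Perm (Fin n)}
    (h : InP i τ) (a b : Fin n) (hab : a < b) (he : i a = i b) : τ a < τ b := by
  obtain ⟨h0, h1⟩ := hi a b hab he
  have : ∃ c, a < c ∧ c < b ∧ i c = i a + 1 := by
    rcases Nat.eq_zero_or_pos (i a) with hz | hz
    · obtain ⟨c, h⟩ := h0 hz
      exact ⟨c, h.1, h.2.1, by omega⟩
    · exact (h1 hz).2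
  obtain ⟨c, hac, hcb, hc⟩ := this
  exact (inP_nbr i h a c hac (by omega)).trans (inP_nbr i h c b hcb (by omega))

theorem fiber_id {n : ℕ} (i : Fin n → ℕ) (π : Equiv.Perm (Fin n)) (h : ∀ a, i (π a) = i a)
    (hm : ∀ a b, a < b → i a = i b → π a < π b) : ∀ a, π a = a := by
  intro a
  induction a using WellFoundedLT.induction with
  | _ a ih =>
    rcases lt_trichotomy (π a) a with hl | hl | hl
    · exact π.injective (ih _ hl)
    · exact hl
    · exfalso
      have hc : π (π.symm a) = a := π.apply_symm_apply a
      have hv := h (π.symm a)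
      rw [hc] at hv
      generalize π.symm a = c at *
      rcases lt_trichotomy c a with h' | h' | h'
      · have := ih c h'
        rw [this] at hc
        exact h'.ne hc
      · subst h'
        exact hl.ne' hc
      · have := hm a c h' hv
        rw [hc] at this
        exact lt_asymm this hl

theorem permAct_inj {n : ℕ} (i : Fin n → ℕ) (hi : Splittable i) {τ σ : Equiv.Perm (Fin n)}
    (ht : InP i τ) (hs : InP i σ) (h : permAct τ i = permAct σ i) : τ = σ := by
  have hv : ∀ a, i (σ.symm (τ a)) = i a := by
    intro a
    have := congrFun h (τ a)
    simp only [permAct, Function.comp, Equiv.symm_apply_apply] at this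
    exact this.symm
  have := fiber_id i (τ.trans σ.symm) (by simpa using hv) (by
    intro a b hab he
    simp only [Equiv.trans_apply]
    have h1 := inP_eq i hi ht a b hab he
    by_contra hcon
    rcases (not_lt.mp hcon).lt_or_eq with h2 | h2
    · have := inP_eq i hi hs _ _ h2 (by rw [hv, hv, he])
      simp only [Equiv.apply_symm_apply] at this
      exact lt_asymm this h1
    · exact h1.ne' (σ.symm.injective h2))
  ext a
  have h3 := this a
  simp only [Equiv.trans_apply, Equiv.symm_apply_eq] at h3
  rw [h3]

theorem permAct_swap_mul {n : ℕ} (i : Fin n → ℕ) (τ : Equiv.Perm (Fin n)) (x y : Fin n) :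
    permAct (Equiv.swap x y * τ) i = permAct τ i ∘ Equiv.swap x y := by
  funext a
  simp [permAct, Equiv.Perm.mul_def, Equiv.symm_trans_apply]

/-- for a splittable tuple `i`, the map `τ ↦ τ·i` is a bijection
from `P_i` onto the equivalence class of `i` under admissible transpositions;
in particular `τ·i = i` with `τ ∈ P_i` forces `τ = 1`. -/
theorem permAct_bijOn_equiv_class {n : ℕ} (i : Fin n → ℕ) (hi : Splittable i) :
    Set.BijOn (fun τ => permAct τ i) {τ : Equiv.Perm (Fin n) | InP i τ}
      {j : Fin n → ℕ | EquivTuples i j} ∧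
    ∀ τ : Equiv.Perm (Fin n), InP i τ → permAct τ i = i → τ = 1 := by
  refine ⟨⟨?_, ?_, ?_⟩, ?_⟩
  · intro τ hτ
    simp only [Set.mem_ofPred_eq] at hτ ⊢
    induction hτ with
    | one => exact Relation.ReflTransGen.refl
    | step τ k hk hP h1 h2 ih =>
      exact Relation.ReflTransGen.tail ih ⟨k, hk, h1, h2, permAct_swap_mul i τ _ _⟩
  · intro τ hτ σ hσ h
    exact permAct_inj i hi hτ hσ h
  · intro j hj
    simp only [Set.mem_ofPred_eq] at hj
    unfold EquivTuples at hj
    induction hj with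
    | refl => exact ⟨1, InP.one, rfl⟩
    | tail _ hs ih =>
      obtain ⟨τ, hτ, rfl⟩ := ih
      obtain ⟨k, hk, h1, h2, rfl⟩ := hs
      exact ⟨_, InP.step τ k hk hτ h1 h2, permAct_swap_mul i τ _ _⟩
  · intro τ hτ h
    exact permAct_inj i hi hτ InP.one h
end

section
/- Let X ⊆ ℕ^n be a nonempty set of tuples such that: (i) whenever i ∈ X and the simple transposition s_k is admissible with respect to i, also s_k·i ∈ X; (ii) no i ∈ X has i_k = i_{k+1} for some 1 ≤ k ≤ n−1; (iii) for every i ∈ X and every 1 ≤ k ≤ n−2 with i_k = i_{k+2}, one has i_{k+1} = i_k + 1. Then every i ∈ X has the property: if i_k = i_l with 1 ≤ k < l ≤ n, then i_k + 1 ∈ {i_{k+1},…,i_{l−1}}. -/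
theorem between_plus_one_of_closed_set {n : ℕ} (X : Set (Fin n → ℕ))
    (hne : X.Nonempty)
    (h1 : ∀ i ∈ X, ∀ j, AdmissibleSwap i j → j ∈ X)
    (h2 : ∀ i ∈ X, ∀ (k : ℕ) (hk : k + 1 < n),
      i ⟨k, Nat.lt_of_succ_lt hk⟩ ≠ i ⟨k + 1, hk⟩)
    (h3 : ∀ i ∈ X, ∀ (k : ℕ) (hk : k + 2 < n),
      i ⟨k, by omega⟩ = i ⟨k + 2, hk⟩ →
      i ⟨k + 1, by omega⟩ = i ⟨k, by omega⟩ + 1) :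
    ∀ i ∈ X, ∀ k l : Fin n, k < l → i k = i l →
      ∃ a, k < a ∧ a < l ∧ i a = i k + 1 := by
  have key : ∀ d : ℕ, ∀ i ∈ X, ∀ (k l : ℕ) (hk : k < n) (hl : l < n), k < l → l - k = d →
      i ⟨k, hk⟩ = i ⟨l, hl⟩ →
      ∃ (a : ℕ) (ha : a < n), k < a ∧ a < l ∧ i ⟨a, ha⟩ = i ⟨k, hk⟩ + 1 := by
    intro d
    induction d using Nat.strong_induction_on with
    | _ d ih =>
    intro i hi k l hk hl hkl hd hv
    by_contra hno
    push Not at hno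
    have hnoc : ∀ (a : ℕ) (ha : a < n), k < a → a < l → i ⟨a, ha⟩ ≠ i ⟨k, hk⟩ := by
      intro a ha h h' he
      obtain ⟨b, hb, hb1, hb2, hb3⟩ := ih (a - k) (by omega) i hi k a hk ha h rfl he.symm
      exact hno b hb hb1 (by omega) hb3
    have hl1 : l ≠ k + 1 := by
      rintro rfl
      exact h2 i hi k hl hv
    have hl2 : l ≠ k + 2 := by
      rintro rfl
      exact hno (k+1) (by omega) (by omega) (by omega) (h3 i hi k hl hv)
    obtain ⟨m, rfl⟩ : ∃ m, l = m + 1 := ⟨l - 1, by omega⟩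
    have hA : i ⟨k, hk⟩ = i ⟨k+1, by omega⟩ + 1 := by
      by_contra hA
      have hj := h1 i hi _ ⟨k, by omega, hA, hno (k+1) (by omega) (by omega) (by omega), rfl⟩
      have e : ∀ (a : ℕ) (ha : a < n), k + 1 < a →
          (i ∘ Equiv.swap (⟨k, hk⟩ : Fin n) ⟨k+1, by omega⟩) ⟨a, ha⟩ = i ⟨a, ha⟩ := by
        intro a ha h
        rw [Function.comp_apply, Equiv.swap_apply_of_ne_of_ne] <;>
          simp only [ne_eq, Fin.mk.injEq] <;> omega
      have e1 : (i ∘ Equiv.swap (⟨k, hk⟩ : Fin n) ⟨k+1, by omega⟩) ⟨k+1, by omega⟩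
          = i ⟨k, hk⟩ := by simp
      obtain ⟨b, hb, hb1, hb2, hb3⟩ := ih (m + 1 - (k+1)) (by omega) _ hj (k+1) (m+1)
        (by omega) hl (by omega) rfl (by rw [e1, e _ _ (by omega), hv])
      rw [e1, e _ _ hb1] at hb3
      exact hno b hb (by omega) hb2 hb3
    have hB : i ⟨m+1, hl⟩ = i ⟨m, by omega⟩ + 1 := by
      by_contra hB
      have hj := h1 i hi _ ⟨m, by omega,
        by rw [← hv]; exact hno m (by omega) (by omega) (by omega), hB, rfl⟩
      have e : ∀ (a : ℕ) (ha : a < n), a < m →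
          (i ∘ Equiv.swap (⟨m, by omega⟩ : Fin n) ⟨m+1, hl⟩) ⟨a, ha⟩ = i ⟨a, ha⟩ := by
        intro a ha h
        rw [Function.comp_apply, Equiv.swap_apply_of_ne_of_ne] <;>
          simp only [ne_eq, Fin.mk.injEq] <;> omega
      have e1 : (i ∘ Equiv.swap (⟨m, by omega⟩ : Fin n) ⟨m+1, hl⟩) ⟨m, by omega⟩
          = i ⟨m+1, hl⟩ := by simp
      obtain ⟨b, hb, hb1, hb2, hb3⟩ := ih (m - k) (by omega) _ hj k m
        hk (by omega) (by omega) rfl (by rw [e1, e _ _ (by omega), hv])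
      rw [e _ _ hb2, e _ _ (by omega)] at hb3
      exact hno b hb (by omega) (by omega) hb3
    obtain ⟨b, hb, hb1, hb2, hb3⟩ := ih (m - (k+1)) (by omega) i hi (k+1) m
      (by omega) (by omega) (by omega) rfl (by omega)
    exact hnoc b hb (by omega) (by omega) (by omega)
  intro i hi k l hkl hv
  obtain ⟨a, ha, h, h', h''⟩ := key _ i hi k l k.2 l.2 hkl rfl hv
  exact ⟨⟨a, ha⟩, h, h', h''⟩
end

section
/- Let X ⊆ ℕ^n be a nonempty set of tuples such that: (i) whenever i ∈ X and the simple transposition s_k is admissible with respect to i, also s_k·i ∈ X; (ii) no i ∈ X has i_k = i_{k+1} for some 1 ≤ k ≤ n−1; (iii) for every i ∈ X and every 1 ≤ k ≤ n−2 with i_k = i_{k+2}, one has i_k = 0 and i_{k+1} = 1. Then every i ∈ X is splittable. -/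
theorem splittable_aux {n : ℕ} (X : Set (Fin n → ℕ))
    (h1 : ∀ i ∈ X, ∀ j, AdmissibleSwap i j → j ∈ X)
    (h2 : ∀ i ∈ X, ∀ (k : ℕ) (hk : k + 1 < n),
      i ⟨k, Nat.lt_of_succ_lt hk⟩ ≠ i ⟨k + 1, hk⟩)
    (h3 : ∀ i ∈ X, ∀ (k : ℕ) (ha : k < n) (hb : k + 1 < n) (hk : k + 2 < n),
      i ⟨k, ha⟩ = i ⟨k + 2, hk⟩ → i ⟨k, ha⟩ = 0 ∧ i ⟨k + 1, hb⟩ = 1) (d : ℕ) :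
    ∀ i ∈ X, ∀ (k l : ℕ) (hkl : k < l) (hl : l < n), l - k = d →
      i ⟨k, by omega⟩ = i ⟨l, hl⟩ → ∀ c, (c + 1 = i ⟨k, by omega⟩ ∨ c = i ⟨k, by omega⟩ + 1) →
      ∃ (m : ℕ) (hm : m < l), k < m ∧ i ⟨m, by omega⟩ = c := by
  induction d using Nat.strong_induction_on with
  | _ d ih =>
  intro i hi k l hkl hl hd he c hc
  by_contra hcon
  have hno : ∀ (m : ℕ) (hm : m < l), k < m → i ⟨m, by omega⟩ ≠ c :=
    fun m hm hkm h => hcon ⟨m, hm, hkm, h⟩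
  have hna : ∀ (m : ℕ) (hm : m < l), k < m → i ⟨m, by omega⟩ ≠ i ⟨k, by omega⟩ := by
    intro m hm hkm h
    obtain ⟨p, hp, hkp, hpc⟩ := ih (m - k) (by omega) i hi k m hkm (by omega) rfl h.symm c hc
    exact hno p (by omega) hkp hpc
  have hk1 : k + 1 < l := by
    by_contra hh
    obtain rfl : l = k + 1 := by omega
    exact h2 i hi k hl he
  obtain ⟨q, rfl⟩ : ∃ q, l = q + 1 := ⟨l - 1, by omega⟩
  have hA : i ⟨k, by omega⟩ = i ⟨k + 1, by omega⟩ + 1 ∨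
      i ⟨k + 1, by omega⟩ = i ⟨k, by omega⟩ + 1 := by
    by_contra hh
    push Not at hh
    have hj := h1 i hi _ ⟨k, by omega, hh.1, hh.2, rfl⟩
    have e1 : ∀ (m : ℕ) (hm : m < n), k + 1 < m →
        (i ∘ Equiv.swap (⟨k, by omega⟩ : Fin n) ⟨k + 1, by omega⟩) ⟨m, hm⟩ = i ⟨m, hm⟩ := by
      intro m hm hkm
      rw [Function.comp_apply, Equiv.swap_apply_of_ne_of_ne] <;> simp <;> omega
    have e2 : (i ∘ Equiv.swap (⟨k, by omega⟩ : Fin n) ⟨k + 1, by omega⟩) ⟨k + 1, by omega⟩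
        = i ⟨k, by omega⟩ := by simp
    obtain ⟨p, hp, hkp, hpc⟩ := ih _ (by omega) _ hj (k + 1) (q + 1) hk1 hl rfl
      (by rw [e2, e1 _ _ hk1, he]) c (by rw [e2]; exact hc)
    rw [e1 _ _ hkp] at hpc
    exact hno p hp (by omega) hpc
  have hB : i ⟨q, by omega⟩ = i ⟨q + 1, hl⟩ + 1 ∨
      i ⟨q + 1, hl⟩ = i ⟨q, by omega⟩ + 1 := by
    by_contra hh
    push Not at hh
    have hj := h1 i hi _ ⟨q, hl, hh.1, hh.2, rfl⟩
    have e1 : ∀ (m : ℕ) (hm : m < q),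
        (i ∘ Equiv.swap (⟨q, by omega⟩ : Fin n) ⟨q + 1, hl⟩) ⟨m, by omega⟩
          = i ⟨m, by omega⟩ := by
      intro m hm
      rw [Function.comp_apply, Equiv.swap_apply_of_ne_of_ne] <;> simp <;> omega
    have e2 : (i ∘ Equiv.swap (⟨q, by omega⟩ : Fin n) ⟨q + 1, hl⟩) ⟨q, by omega⟩
        = i ⟨q + 1, hl⟩ := by simp
    obtain ⟨p, hp, hkp, hpc⟩ := ih (q - k) (by omega) _ hj k q (by omega) (by omega) rfl
      (by rw [e2, e1 k (by omega), he]) c (by rw [e1 k (by omega)]; exact hc)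
    rw [e1 p hp] at hpc
    exact hno p (by omega) hkp hpc
  have n1 := hno (k + 1) hk1 (by omega)
  have n2 := hno q (by omega) (by omega)
  by_cases hq : q = k + 1
  · subst hq
    have := h3 i hi k (by omega) (by omega) hl he
    omega
  · obtain ⟨p, hp, hkp, hpc⟩ := ih (q - (k + 1)) (by omega) i hi (k + 1) q (by omega) (by omega) rfl
      (by omega) (i ⟨k, by omega⟩) (by omega)
    exact hna p (by omega) (by omega) hpc

theorem splittable_of_closed_set {n : ℕ} (X : Set (Fin n → ℕ))
    (hne : X.Nonempty)
    (h1 : ∀ i ∈ X, ∀ j, AdmissibleSwap i j → j ∈ X)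
    (h2 : ∀ i ∈ X, ∀ (k : ℕ) (hk : k + 1 < n),
      i ⟨k, Nat.lt_of_succ_lt hk⟩ ≠ i ⟨k + 1, hk⟩)
    (h3 : ∀ i ∈ X, ∀ (k : ℕ) (hk : k + 2 < n),
      i ⟨k, by omega⟩ = i ⟨k + 2, hk⟩ →
      i ⟨k, by omega⟩ = 0 ∧ i ⟨k + 1, by omega⟩ = 1) :
    ∀ i ∈ X, Splittable i := by
  intro i hi k l hkl he
  have key := splittable_aux X h1 h2 (fun i hi k _ _ hk => h3 i hi k hk) _ i hi k.1 l.1 hkl l.2 rfl he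
  have key2 : ∀ c, (c + 1 = i k ∨ c = i k + 1) → ∃ a, k < a ∧ a < l ∧ i a = c := by
    intro c hc
    obtain ⟨m, hm, hkm, h⟩ := key c hc
    exact ⟨⟨m, by omega⟩, hkm, hm, h⟩
  refine ⟨fun h => key2 1 (by omega), fun h => ⟨?_, key2 _ (Or.inr rfl)⟩⟩
  obtain ⟨a, ha, hb, hh⟩ := key2 (i k - 1) (by omega)
  exact ⟨a, ha, hb, by omega⟩
end

section
/- Let p ≥ 3 be odd, m = (p−1)/2, let i ∈ W'(n,p) admit 1 ≤ k < l ≤ n with 1 ≤ i_k = i_l ≤ m−1 and i_k − 1 ∉ {i_{k+1},…,i_{l−1}}, let u be the minimal such common value, and let 1 ≤ r_0 < r_1 < … < r_{m−1−u} < q < t_{m−1−u} < … < t_1 < t_0 ≤ n be the unique sequence with i_q = m, i_{r_j} = i_{t_j} = u + j (0 ≤ j ≤ m−1−u), i_a ≠ u−1 for r_0 ≤ a ≤ t_0, and i_b ≤ u−1 for b outside this sequence. Let î ∈ ℕ^{n−p+2u+1} be the tuple obtained from i by deleting the entries at positions r_1, …, r_{m−1−u}, q, t_{m−1−u}, …,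 t_1, t_0 (keeping position r_0). Then: (1) î has exactly one entry equal to u and all its other entries are strictly less than u; (2) î is splittable. -/
/-- The second alternative in condition (b) of the definition of `W'(n,p)`
(with `m = (p−1)/2`): there is a sequence
`k ≤ r_0 < … < r_{m−1−i_k} < q < t_{m−1−i_k} < … < t_0 ≤ l` with `i q = m`,
`i (r j) = i (t j) = i k + j`, and `i k + j` not occurring strictly between
`r j` and `t j`. -/
def SpecialBetween {n : ℕ} (m : ℕ) (i : Fin n → ℕ) (k l : Fin n) : Prop :=
  ∃ (r t : Fin (m - i k) → Fin n) (q : Fin n),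
    StrictMono r ∧ StrictAnti t ∧
    (∀ j, k ≤ r j ∧ r j < q) ∧ (∀ j, q < t j ∧ t j ≤ l) ∧
    k ≤ q ∧ q ≤ l ∧ i q = m ∧
    (∀ j, i (r j) = i k + (j : ℕ) ∧ i (t j) = i k + (j : ℕ)) ∧
    (∀ j, ∀ a : Fin n, r j < a → a < t j → i a ≠ i k + (j : ℕ))

/-- The set `W'(n,p)` of tuples in `{0,…,(p−1)/2}^n`. -/
def WPrime (n p : ℕ) (i : Fin n → ℕ) : Prop :=
  (∀ k, i k ≤ (p - 1) / 2) ∧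
  ∀ k l : Fin n, k < l → i k = i l →
    (i k = 0 → ∃ a, k < a ∧ a < l ∧ i a = 1) ∧
    (1 ≤ i k →
      ((∃ a, k < a ∧ a < l ∧ i a + 1 = i k) ∧ (∃ a, k < a ∧ a < l ∧ i a = i k + 1)) ∨
      SpecialBetween ((p - 1) / 2) i k l)

/-- `v` is a common value `1 ≤ v ≤ m − 1` of two entries `i k = i l = v` (`k < l`)
such that `v − 1` does not occur strictly between them. -/
def BadPair {n : ℕ} (m : ℕ) (i : Fin n → ℕ) (v : ℕ) : Prop :=
  ∃ k l : Fin n, k < l ∧ i k = v ∧ i l = v ∧ 1 ≤ v ∧ v + 1 ≤ m ∧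
    ∀ a : Fin n, k < a → a < l → i a + 1 ≠ v

/-- The sequence `1 ≤ r_0 < r_1 < … < r_{m−1−u} < q < t_{m−1−u} < … < t_1 < t_0 ≤ n`
of Lemma 5.10(1): (a) `i q = m` and `i (r j) = i (t j) = u + j`;
(b) `i a ≠ u − 1` for all `r_0 ≤ a ≤ t_0`; (c) `i b ≤ u − 1` for every index `b`
not occurring in the sequence. -/
def GoodSeq {n : ℕ} (m u : ℕ) (i : Fin n → ℕ)
    (r t : Fin (m - u) → Fin n) (q : Fin n) : Prop :=
  StrictMono r ∧ StrictAnti t ∧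
  (∀ j, r j < q) ∧ (∀ j, q < t j) ∧
  i q = m ∧
  (∀ j, i (r j) = u + (j : ℕ) ∧ i (t j) = u + (j : ℕ)) ∧
  (∀ j, ∀ a : Fin n, r j ≤ a → a ≤ t j → i a + 1 ≠ u) ∧
  (∀ a : Fin n, (∀ j, a ≠ r j ∧ a ≠ t j) → a ≠ q → i a + 1 ≤ u)

/-- deleting from `i` the entries at positions
`r_1, …, r_{m−1−u}, q, t_{m−1−u}, …, t_1, t_0` (keeping `r_0`) — encoded by the
strictly monotone enumeration `e` of the remaining positions — yields a tuple
`î = i ∘ e` of length `n − p + 2u + 1` which (1) has exactly one entry equal to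
`u`, all other entries being strictly less than `u`, and (2) is splittable. -/
theorem deleted_tuple_splittable (n p m u : ℕ) (hp : p = 2 * m + 1) (h3 : 3 ≤ p)
    (i : Fin n → ℕ) (hi : WPrime n p i)
    (hu : IsLeast {v | BadPair m i v} u)
    (r t : Fin (m - u) → Fin n) (q : Fin n) (hseq : GoodSeq m u i r t q)
    (n₀ : ℕ) (hn₀ : n₀ + (p - 1 - 2 * u) = n)
    (e : Fin n₀ → Fin n) (he : StrictMono e)
    (hrange : Set.range e =
      {a : Fin n | (∀ j : Fin (m - u), j.val ≠ 0 → a ≠ r j) ∧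
        (∀ j, a ≠ t j) ∧ a ≠ q}) :
    (∃! a : Fin n₀, i (e a) = u) ∧
    (∀ a : Fin n₀, i (e a) ≠ u → i (e a) < u) ∧
    Splittable (fun a => i (e a)) := by
  have hm : (p - 1) / 2 = m := by omega
  obtain ⟨⟨_, _, _, _, _, hu1, hum, _⟩, hmin⟩ := hu
  obtain ⟨hr, ht, hrq, hqt, hq, hval, hno, hout⟩ := hseq
  obtain ⟨hle, hW⟩ := hi
  rw [hm] at hW
  have hj : 0 < m - u := by omega
  -- characterization of kept positions
  have hmem : ∀ a : Fin n, (∃ b, e b = a) ↔ ((∀ j : Fin (m - u), j.val ≠ 0 → a ≠ r j) ∧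
        (∀ j, a ≠ t j) ∧ a ≠ q) := by
    intro a
    have := Set.ext_iff.1 hrange a
    simpa using this
  have hsmall : ∀ a : Fin n, i a < u → ∃ b, e b = a := by
    intro a ha
    refine (hmem a).2 ⟨?_, ?_, ?_⟩
    · rintro j - rfl
      have := (hval j).1
      omega
    · rintro j rfl
      have := (hval j).2
      omega
    · rintro rfl
      omega
  have hr0 : ∃ b, e b = r ⟨0, hj⟩ := by
    refine (hmem _).2 ⟨?_, ?_, ?_⟩
    · intro j hj0 h
      have := hr.injective h
      subst this
      exact hj0 rfl
    · intro j h
      exact absurd h (ne_of_lt ((hrq _).trans (hqt j)))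
    · exact ne_of_lt (hrq _)
  have hvr0 : i (r ⟨0, hj⟩) = u := by simpa using (hval ⟨0, hj⟩).1
  have hkept : ∀ b, e b ≠ r ⟨0, hj⟩ → i (e b) < u := by
    intro b hb
    obtain ⟨h1, h2, h3⟩ := (hmem (e b)).1 ⟨b, rfl⟩
    have := hout (e b) (fun j => ⟨?_, h2 j⟩) h3
    · omega
    · by_cases hj0 : j.val = 0
      · have : j = ⟨0, hj⟩ := Fin.ext hj0
        rw [this]; exact hb
      · exact h1 j hj0
  have key : ∀ K L a : Fin n, i K = i L → i K < u → K < a → a < L → i a = i K + 1 →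
      ∃ b, K < e b ∧ e b < L ∧ i (e b) = i K + 1 := by
    intro K L a hKL hKu hKa haL ha
    by_cases hau : i a < u
    · obtain ⟨b, rfl⟩ := hsmall a hau
      exact ⟨b, hKa, haL, ha⟩
    · have hau' : i a = u := by omega
      have hcase : a = r ⟨0, hj⟩ ∨ a = t ⟨0, hj⟩ := by
        by_contra hc
        push Not at hc
        have := hout a (fun j => ?_) ?_
        · omega
        · by_cases hj0 : j.val = 0
          · have : j = ⟨0, hj⟩ := Fin.ext hj0
            rw [this]; exact hc
          · refine ⟨?_, ?_⟩
            · rintro rfl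
              have := (hval j).1
              omega
            · rintro rfl
              have := (hval j).2
              omega
        · rintro rfl
          omega
      obtain ⟨b, hb⟩ := hr0
      refine ⟨b, ?_⟩
      rw [hb]
      rcases hcase with h | h
      · rw [← h]; exact ⟨hKa, haL, ha⟩
      · refine ⟨?_, ?_, by omega⟩
        · by_contra hc
          have := hno ⟨0, hj⟩ K (not_lt.1 hc) (by rw [← h]; exact hKa.le)
          omega
        · have h1 := (hrq ⟨0, hj⟩).trans (hqt ⟨0, hj⟩)
          rw [← h] at h1
          exact h1.trans haL
  obtain ⟨a0, ha0⟩ := hr0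
  have huniq : ∀ a, i (e a) = u → a = a0 := by
    intro a ha
    by_contra hne
    have := hkept a (by rw [← ha0]; exact fun h => hne (he.injective h))
    omega
  refine ⟨⟨a0, by simp only [ha0, hvr0], huniq⟩, ?_, ?_⟩
  · intro a ha
    apply hkept
    intro h
    rw [h] at ha
    exact ha hvr0
  · intro k l hkl hik
    simp only at hik ⊢
    have hlt : i (e k) < u := by
      apply hkept
      intro h
      have h1 : i (e k) = u := by rw [h]; exact hvr0
      have h2 := huniq k h1
      have h3 := huniq l (by omega)
      rw [h2, h3] at hkl
      exact lt_irrefl _ hkl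
    have hKL : e k < e l := he hkl
    obtain ⟨w0, w1⟩ := hW (e k) (e l) hKL hik
    refine ⟨fun h0 => ?_, fun h1 => ⟨?_, ?_⟩⟩
    · obtain ⟨a, x, y, z⟩ := w0 h0
      obtain ⟨b, x, y, z⟩ := key _ _ a hik hlt x y (by omega)
      exact ⟨b, he.lt_iff_lt.1 x, he.lt_iff_lt.1 y, by omega⟩
    · by_contra hc
      have : BadPair m i (i (e k)) := by
        refine ⟨e k, e l, hKL, rfl, hik.symm, h1, by omega, ?_⟩
        intro a x y z
        obtain ⟨b, rfl⟩ := hsmall a (by omega)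
        exact hc ⟨b, he.lt_iff_lt.1 x, he.lt_iff_lt.1 y, z⟩
      have := hmin this
      omega
    · have : ∃ a, e k < a ∧ a < e l ∧ i a = i (e k) + 1 := by
        rcases w1 h1 with ⟨_, h⟩ | ⟨r', t', q', hr', _, hk', _, _, hq', _, hv', _⟩
        · exact h
        · refine ⟨r' ⟨1, by omega⟩, ?_, (hk' _).2.trans_le hq', (hv' _).1⟩
          exact (hk' ⟨0, by omega⟩).1.trans_lt (hr' (by simp [Fin.lt_def]))
      obtain ⟨a, x, y, z⟩ := this
      obtain ⟨b, x, y, z⟩ := key _ _ a hik hlt x y z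
      exact ⟨b, he.lt_iff_lt.1 x, he.lt_iff_lt.1 y, z⟩
end

section
/- Let F be a field of characteristic ≠ 2 and let M be a module over the affine Hecke–Clifford algebra H_n^c(F) such that, for each 1 ≤ j ≤ n, M is spanned over F by eigenvectors of the action of x_j (i.e. each x_j acts diagonalizably). Suppose z ∈ M is nonzero and there are scalars a_1,…,a_n ∈ F with x_j² z = a_j z for all 1 ≤ j ≤ n. Then a_k ≠ a_{k+1} for every 1 ≤ k ≤ n−1. -/
/-- Generators of the affine Hecke–Clifford algebra `H_n^c(F)` (0-indexed):
`s i` for `i : Fin (n-1)`, and `x i`, `c i` for `i : Fin n`. -/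
inductive AHCGen (n : ℕ) : Type
  | s : Fin (n - 1) → AHCGen n
  | x : Fin n → AHCGen n
  | c : Fin n → AHCGen n

/-- The index `i` of the transposition `s i`, as an index in `Fin n`. -/
def idxL {n : ℕ} (i : Fin (n - 1)) : Fin n := ⟨i.val, by have := i.isLt; omega⟩

/-- The index `i + 1`, as an index in `Fin n`. -/
def idxR {n : ℕ} (i : Fin (n - 1)) : Fin n := ⟨i.val + 1, by have := i.isLt; omega⟩

open FreeAlgebra in
/-- The defining relations of the affine Hecke–Clifford algebra `H_n^c(F)`. -/
inductive AHCRel (F : Type) [Field F] (n : ℕ) :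
    FreeAlgebra F (AHCGen n) → FreeAlgebra F (AHCGen n) → Prop
  | s_sq (i : Fin (n - 1)) :
      AHCRel F n (ι F (AHCGen.s i) * ι F (AHCGen.s i)) 1
  | s_comm (i j : Fin (n - 1)) (h : i.val + 1 < j.val ∨ j.val + 1 < i.val) :
      AHCRel F n (ι F (AHCGen.s i) * ι F (AHCGen.s j))
        (ι F (AHCGen.s j) * ι F (AHCGen.s i))
  | braid (i j : Fin (n - 1)) (h : j.val = i.val + 1) :
      AHCRel F n (ι F (AHCGen.s i) * ι F (AHCGen.s j) * ι F (AHCGen.s i))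
        (ι F (AHCGen.s j) * ι F (AHCGen.s i) * ι F (AHCGen.s j))
  | x_comm (i j : Fin n) :
      AHCRel F n (ι F (AHCGen.x i) * ι F (AHCGen.x j))
        (ι F (AHCGen.x j) * ι F (AHCGen.x i))
  | c_sq (i : Fin n) :
      AHCRel F n (ι F (AHCGen.c i) * ι F (AHCGen.c i)) 1
  | c_anticomm (i j : Fin n) (h : i ≠ j) :
      AHCRel F n (ι F (AHCGen.c i) * ι F (AHCGen.c j))
        (-(ι F (AHCGen.c j) * ι F (AHCGen.c i)))
  | s_x (i : Fin (n - 1)) :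
      AHCRel F n (ι F (AHCGen.s i) * ι F (AHCGen.x (idxL i)))
        (ι F (AHCGen.x (idxR i)) * ι F (AHCGen.s i)
          - (1 + ι F (AHCGen.c (idxL i)) * ι F (AHCGen.c (idxR i))))
  | s_x_comm (i : Fin (n - 1)) (j : Fin n) (h1 : j ≠ idxL i) (h2 : j ≠ idxR i) :
      AHCRel F n (ι F (AHCGen.s i) * ι F (AHCGen.x j))
        (ι F (AHCGen.x j) * ι F (AHCGen.s i))
  | s_c1 (i : Fin (n - 1)) :
      AHCRel F n (ι F (AHCGen.s i) * ι F (AHCGen.c (idxL i)))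
        (ι F (AHCGen.c (idxR i)) * ι F (AHCGen.s i))
  | s_c2 (i : Fin (n - 1)) :
      AHCRel F n (ι F (AHCGen.s i) * ι F (AHCGen.c (idxR i)))
        (ι F (AHCGen.c (idxL i)) * ι F (AHCGen.s i))
  | s_c_comm (i : Fin (n - 1)) (j : Fin n) (h1 : j ≠ idxL i) (h2 : j ≠ idxR i) :
      AHCRel F n (ι F (AHCGen.s i) * ι F (AHCGen.c j))
        (ι F (AHCGen.c j) * ι F (AHCGen.s i))
  | x_c_anti (i : Fin n) :
      AHCRel F n (ι F (AHCGen.x i) * ι F (AHCGen.c i))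
        (-(ι F (AHCGen.c i) * ι F (AHCGen.x i)))
  | x_c_comm (i j : Fin n) (h : i ≠ j) :
      AHCRel F n (ι F (AHCGen.x i) * ι F (AHCGen.c j))
        (ι F (AHCGen.c j) * ι F (AHCGen.x i))

/-- The affine Hecke–Clifford algebra `H_n^c(F)`: the quotient of the free
`F`-algebra on the generators by the two-sided ideal generated by the defining
relations. -/
abbrev AHC (F : Type) [Field F] (n : ℕ) := RingQuot (AHCRel F n)

/-- The generator `s i` in `H_n^c(F)`. -/
noncomputable def sE (F : Type) [Field F] (n : ℕ) (i : Fin (n - 1)) : AHC F n :=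
  RingQuot.mkAlgHom F (AHCRel F n) (FreeAlgebra.ι F (AHCGen.s i))

/-- The generator `x i` in `H_n^c(F)`. -/
noncomputable def xE (F : Type) [Field F] (n : ℕ) (i : Fin n) : AHC F n :=
  RingQuot.mkAlgHom F (AHCRel F n) (FreeAlgebra.ι F (AHCGen.x i))

/-- The generator `c i` in `H_n^c(F)`. -/
noncomputable def cE (F : Type) [Field F] (n : ℕ) (i : Fin n) : AHC F n :=
  RingQuot.mkAlgHom F (AHCRel F n) (FreeAlgebra.ι F (AHCGen.c i))

open Polynomial in
theorem ahc_aux_poly {F M : Type} [Field F] [AddCommGroup M] [Module F M]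
    (g : Module.End F M) (hg : Submodule.span F {v : M | ∃ a : F, g v = a • v} = ⊤) (v : M) :
    ∃ q : F[X], q.eval 0 ≠ 0 ∧ aeval g (X * q) v = 0 := by
  have hv : v ∈ Submodule.span F {v : M | ∃ a : F, g v = a • v} := by rw [hg]; trivial
  induction hv using Submodule.span_induction with
  | mem v h =>
    obtain ⟨b, hb⟩ := h
    by_cases h0 : b = 0
    · exact ⟨1, by simp, by simp [hb, h0]⟩
    · refine ⟨X - C b, by simpa using h0, ?_⟩
      simp [hb, Module.algebraMap_end_apply]
  | zero => exact ⟨1, by simp, by simp⟩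
  | add v w _ _ hv hw =>
    obtain ⟨p, hp, hpv⟩ := hv
    obtain ⟨q, hq, hqw⟩ := hw
    refine ⟨p * q, by simp [hp, hq], ?_⟩
    rw [map_add]
    have e1 : X * (p * q) = q * (X * p) := by ring
    have e2 : X * (p * q) = p * (X * q) := by ring
    nth_rewrite 1 [e1]
    rw [e2, map_mul _ q, map_mul _ p, Module.End.mul_apply, Module.End.mul_apply, hpv, hqw]
    simp
  | smul r v _ hv =>
    obtain ⟨p, hp, hpv⟩ := hv
    exact ⟨p, hp, by rw [map_smul, hpv, smul_zero]⟩

open Polynomial in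
theorem ahc_aux_ker {F M : Type} [Field F] [AddCommGroup M] [Module F M]
    (g : Module.End F M) (hg : Submodule.span F {v : M | ∃ a : F, g v = a • v} = ⊤) (v : M)
    (h : g (g v) = 0) : g v = 0 := by
  obtain ⟨q, hq, hv⟩ := ahc_aux_poly g hg v
  have e : X * q = (divX q) * (X * X) + C (q.eval 0) * X := by
    nth_rewrite 1 [← divX_mul_X_add q]
    rw [coeff_zero_eq_eval_zero]; ring
  rw [e] at hv
  simp [h, Module.algebraMap_end_apply] at hv
  exact hv.resolve_left hq

theorem ahc_aux_sq {F M : Type} [Field F] [AddCommGroup M] [Module F M]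
    (g : Module.End F M) (hg : Submodule.span F {v : M | ∃ a : F, g v = a • v} = ⊤) (a : F) :
    Submodule.span F {v : M | ∃ b : F, (g * g - a • 1 : Module.End F M) v = b • v} = ⊤ := by
  rw [eq_top_iff, ← hg]
  apply Submodule.span_mono
  rintro v ⟨b, hb⟩
  exact ⟨b * b - a, by simp [hb, sub_smul, mul_smul]⟩

theorem ahc_aux_main {F M : Type} [Field F] [AddCommGroup M] [Module F M] (hF : (2 : F) ≠ 0)
    (x y s c d : Module.End F M)
    (hx : Submodule.span F {v : M | ∃ a : F, x v = a • v} = ⊤)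
    (hy : Submodule.span F {v : M | ∃ a : F, y v = a • v} = ⊤)
    (hxy : x * y = y * x) (hc : c * c = 1) (hd : d * d = 1) (hcd : c * d = -(d * c))
    (hsx : s * x = y * s - (1 + c * d))
    (hxc : x * c = -(c * x)) (hyd : y * d = -(d * y)) (hxd : x * d = d * x) (hyc : y * c = c * y)
    (a : F) (z : M) (h1 : x (x z) = a • z) (h2 : y (y z) = a • z) : z = 0 := by
  obtain ⟨e, he⟩ : ∃ e, e = c * d := ⟨_, rfl⟩
  have hee : e * e = -1 := by
    have : c * d * (c * d) = -(c * c * (d * d)) := by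
      calc c * d * (c * d) = c * (d * c) * d := by noncomm_ring
        _ = c * (-(c * d)) * d := by rw [hcd]; simp
        _ = _ := by noncomm_ring
    rw [he, this, hc, hd]; simp
  have hxe : x * e = -(e * x) := by
    rw [he, ← mul_assoc, hxc, neg_mul, mul_assoc, hxd, mul_assoc]
  have hye : y * e = -(e * y) := by
    rw [he, ← mul_assoc, hyc, mul_assoc, hyd, mul_neg, mul_assoc]
  rw [← he] at hsx
  clear hcd hxc hyd hxd hyc hc hd he
  have Hee : ∀ v, e (e v) = -v := fun v => by simpa using LinearMap.congr_fun hee v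
  have Hxe : ∀ v, x (e v) = -e (x v) := fun v => by simpa using LinearMap.congr_fun hxe v
  have Hye : ∀ v, y (e v) = -e (y v) := fun v => by simpa using LinearMap.congr_fun hye v
  have Hxy : ∀ v, x (y v) = y (x v) := fun v => by simpa using LinearMap.congr_fun hxy v
  have Hsx : ∀ v, s (x v) = y (s v) - (v + e v) := fun v => by
    simpa using LinearMap.congr_fun hsx v
  -- on the simultaneous eigenspace the intertwining correction vanishes
  have key : ∀ v, x (x v) = a • v → y (y v) = a • v → x v + y v + e (x v - y v) = 0 := by
    intro v h1 h2
    have hs : y (y (s v)) - a • s v = x v + y v + e (x v - y v) := by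
      have t := Hsx (x v)
      rw [h1, Hsx, map_sub, map_add, Hye, map_smul] at t
      rw [t, map_sub]; abel
    have := ahc_aux_ker _ (ahc_aux_sq y hy a) (s v) (by
      simp only [LinearMap.sub_apply, Module.End.mul_apply, LinearMap.smul_apply,
        Module.End.one_apply, hs]
      simp only [map_add, map_sub, Hye, map_neg, ← Hxy, h2, map_smul, neg_neg, smul_add, smul_sub,
        smul_neg]
      abel)
    simpa [hs] using this
  have k3 : (2 * 2 * a) • z = 0 := by
    -- apply the correction to `x z`, `y z` separately
    have a1 := key (x z) (by rw [h1, map_smul]) (by rw [← Hxy, ← Hxy, h2, map_smul])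
    have a2 := key (y z) (by rw [Hxy, Hxy, h1, map_smul]) (by rw [h2, map_smul])
    have a3 : (a • z + x (y z) + e (a • z - x (y z))) = 0 := by rw [← h1, Hxy]; simpa [h1, Hxy] using a1
    have a4 : (x (y z) + a • z + e (x (y z) - a • z)) = 0 := by simpa [h2] using a2
    have b1 : (2:F) • (a • z + x (y z)) = 0 := by
      have := congrArg₂ (· + ·) a3 a4
      simp only [map_sub, add_zero] at this
      rw [two_smul, ← this]; abel
    have b2 := (smul_eq_zero.1 b1).resolve_left hF
    have b3 : e (a • z - x (y z)) = 0 := by rw [b2, zero_add] at a3; exact a3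
    have b4 : a • z - x (y z) = 0 := by
      have := Hee (a • z - x (y z)); rw [b3, map_zero] at this
      exact neg_eq_zero.1 this.symm
    have b5 : (2:F) • (a • z) = 0 := by
      have := congrArg₂ (· + ·) b2 b4
      simp only [add_zero] at this
      rw [two_smul, ← this]; abel
    rw [mul_assoc, mul_smul, mul_smul, b5, smul_zero]
  by_contra hz
  have ha : a = 0 := by
    have := (smul_eq_zero.1 k3).resolve_right hz
    simpa [hF] using this
  subst ha
  rw [zero_smul] at h1 h2
  have hx0 := ahc_aux_ker x hx z h1
  have hy0 := ahc_aux_ker y hy z h2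
  have t := Hsx z
  rw [hx0, map_zero] at t
  have t1 : y (s z) = z + e z := (sub_eq_zero.1 t.symm)
  have t2 := ahc_aux_ker y hy (s z) (by rw [t1, map_add, Hye, hy0]; simp)
  rw [t1] at t2
  have t3 := congrArg e t2
  rw [map_add, Hee, map_zero] at t3
  have : (2:F) • z = 0 := by
    rw [two_smul]
    calc z + z = (z + e z) - (e z + -z) := by abel
      _ = 0 := by rw [t2, t3, sub_zero]
  exact hz ((smul_eq_zero.1 this).resolve_left hF)

/-- if each `x_j` acts diagonalizably on the `H_n^c(F)`-module `M`
(char F ≠ 2), `z ≠ 0`, and `x_j² z = a_j z` for scalars `a_j ∈ F`, then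
consecutive scalars are distinct: `a_k ≠ a_{k+1}`. -/
theorem consecutive_eigenvalues_distinct (F : Type) [Field F] (hF : (2 : F) ≠ 0)
    (n : ℕ) (M : Type) [AddCommGroup M] [Module F M] [Module (AHC F n) M]
    [IsScalarTower F (AHC F n) M]
    (hdiag : ∀ j : Fin n,
      Submodule.span F {v : M | ∃ a : F, xE F n j • v = a • v} = ⊤)
    (z : M) (hz : z ≠ 0) (a : Fin n → F)
    (ha : ∀ j : Fin n, (xE F n j) ^ 2 • z = a j • z)
    (k : ℕ) (hk : k + 1 < n) :
    a ⟨k, Nat.lt_of_succ_lt hk⟩ ≠ a ⟨k + 1, hk⟩ := by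
  intro hak
  apply hz
  let i : Fin (n - 1) := ⟨k, by omega⟩
  have : SMulCommClass F (AHC F n) M := IsScalarTower.to_smulCommClass
  let ρ : AHC F n →ₐ[F] Module.End F M := Algebra.lsmul F F M
  have R : ∀ {p q}, AHCRel F n p q →
      ρ (RingQuot.mkAlgHom F (AHCRel F n) p) = ρ (RingQuot.mkAlgHom F (AHCRel F n) q) :=
    fun h => congrArg ρ (RingQuot.mkAlgHom_rel F h)
  have hne : idxL i ≠ idxR i := by simp [idxL, idxR]
  refine ahc_aux_main hF (ρ (xE F n (idxL i))) (ρ (xE F n (idxR i))) (ρ (sE F n i))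
    (ρ (cE F n (idxL i))) (ρ (cE F n (idxR i))) (hdiag _) (hdiag _)
    ?_ ?_ ?_ ?_ ?_ ?_ ?_ ?_ ?_ (a (idxL i)) z ?_ ?_
  · simpa only [xE, cE, sE, map_mul] using R (AHCRel.x_comm (idxL i) (idxR i))
  · simpa only [xE, cE, sE, map_mul, map_one] using R (AHCRel.c_sq (idxL i))
  · simpa only [xE, cE, sE, map_mul, map_one] using R (AHCRel.c_sq (idxR i))
  · simpa only [xE, cE, sE, map_mul, map_neg] using R (AHCRel.c_anticomm _ _ hne)
  · simpa only [xE, cE, sE, map_mul, map_sub, map_add, map_one] using R (AHCRel.s_x i)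
  · simpa only [xE, cE, sE, map_mul, map_neg] using R (AHCRel.x_c_anti (idxL i))
  · simpa only [xE, cE, sE, map_mul, map_neg] using R (AHCRel.x_c_anti (idxR i))
  · simpa only [xE, cE, sE, map_mul] using R (AHCRel.x_c_comm _ _ hne)
  · simpa only [xE, cE, sE, map_mul] using R (AHCRel.x_c_comm _ _ hne.symm)
  · have := ha (idxL i)
    rw [pow_two, mul_smul] at this
    exact this
  · have := ha (idxR i)
    rw [pow_two, mul_smul] at this
    exact this.trans (congrArg (· • z) hak.symm)
end
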